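/- Quantum determinant formula: under these hypotheses, for every 1 ≤ α ≤ r+1 and n ∈ ℤ one has M_{α,n} = R_{α,n}, i.e. M_{α,n} = Σ_{v} c_v(q)·M_{n-v_1}·M_{n-v_2}⋯M_{n-v_α}, where the finite sum runs over the exponent vectors v ∈ ℤ^α in the support of the Laurent polynomial Δ_q(u_1,…,u_α) = ∏_{1≤a<b≤α}(1 − q·u_b·u_a^{−1}) and c_v ∈ ℤ[q] is the corresponding coefficient. In particular each M_{α,n} is a polynomial in the M_{1,m} with coefficients in ℤ[q]. -/

import Mathlib

/-- The set of pairs (a,b) with 1 ≤ a < b ≤ α (0-indexed as Fin α). -/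
def qvPairs (α : ℕ) : Finset (Fin α × Fin α) :=
  Finset.univ.filter fun p => p.1 < p.2

/-- The exponent of u_i in the monomial of Δ_q(u₁,…,u_α) = ∏_{a<b} (1 - q·u_b·u_a⁻¹)
obtained by choosing the term -q·u_b·u_a⁻¹ exactly for the pairs (a,b) ∈ S. -/
def qvExp (α : ℕ) (S : Finset (Fin α × Fin α)) (i : Fin α) : ℤ :=
  ((S.filter fun p => p.2 = i).card : ℤ) - ((S.filter fun p => p.1 = i).card : ℤ)

/-- The quantum determinant R_{α,n} = Σ_v c_v(q)·M_{n-v₁}⋯M_{n-v_α},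
where Δ_q(u₁,…,u_α) = Σ_v c_v·u₁^{v₁}⋯u_α^{v_α}; here the sum over exponent vectors v
in the support of Δ_q with central coefficients c_v(q) ∈ ℤ[q] is written out as the
expansion of the product ∏_{a<b} (1 - q·u_b·u_a⁻¹) over subsets S of the pair set. -/
def qDet {R : Type*} [Ring R] (q : R) (f : ℤ → R) (α : ℕ) (n : ℤ) : R :=
  ∑ S ∈ (qvPairs α).powerset,
    (-q) ^ S.card * (List.ofFn fun i : Fin α => f (n - qvExp α S i)).prod

/-!
The proof is an induction on the number of levels of the system. A Darboux transformation with a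
central parameter `t`, given on the first level by `M₁(n) - t M₁(n - 1)`, turns an M-system into
one with a level less. For a generic parameter, `t = X` in a power series ring, the induction
hypothesis thus writes the transform of level `α` as the quantum determinant of
`M₁(n) - X M₁(n - 1)`. The right linear functional `X ^ i ↦ q ^ i M₁(n + i)` sends the transform
of level `α` to `M_{α+1}(n)`, by the exchange relations, and sends that quantum determinant to
`R_{α+1,n}`, because this is the expansion of `Δ_q(u₁, …, u_{α+1})` along the factors
`1 - q u_b u₁⁻¹`.
-/

section QCommute

variable {K R : Type*} [CommRing K] [Ring R] [Algebra K R] {q : Kˣ} {c d : ℤ} {x y z : R}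

/-- The elements `x` and `y` commute up to a power of `q`: `x * y = q ^ c • (y * x)`. It is encoded
as a `SemiconjBy` so that products and differences on the right are covered by Mathlib. -/
def QCommute (q : Kˣ) (c : ℤ) (x y : R) : Prop := SemiconjBy x y (q ^ c • y)

namespace QCommute

theorem congr_exponent (h : QCommute q c x y) (hcd : c = d) : QCommute q d x y := hcd ▸ h

theorem one_right (q : Kˣ) (x : R) : QCommute q 0 x 1 := by
  simp [QCommute]

theorem mul_eq_smul (h : QCommute q c x y) : x * y = q ^ c • (y * x) := by
  rw [h.eq, smul_mul_assoc]

theorem mul_eq_mul (h : QCommute q 0 x y) : x * y = y * x := by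
  simpa using h.mul_eq_smul

theorem mul_eq_pow_smul {k : ℕ} (h : QCommute q k x y) : x * y = (q : K) ^ k • (y * x) := by
  simpa [Units.smul_def] using h.mul_eq_smul

theorem symm (h : QCommute q c x y) : QCommute q (-c) y x := by
  rw [QCommute, SemiconjBy, smul_mul_assoc, h.mul_eq_smul, smul_smul, ← zpow_add, neg_add_cancel,
    zpow_zero, one_smul]

theorem mul_right (hy : QCommute q c x y) (hz : QCommute q d x z) :
    QCommute q (c + d) x (y * z) := by
  simpa only [QCommute, smul_mul_smul_comm, ← zpow_add] using SemiconjBy.mul_right hy hz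

theorem sub_right (hy : QCommute q c x y) (hz : QCommute q c x z) : QCommute q c x (y - z) := by
  simpa only [QCommute, smul_sub] using SemiconjBy.sub_right hy hz

theorem smul_right (h : QCommute q c x y) (k : K) : QCommute q c x (k • y) := by
  rw [QCommute, SemiconjBy, mul_smul_comm, h.eq, smul_comm, smul_mul_assoc k]

theorem of_mul_isUnit (hyz : QCommute q (c + d) x (y * z)) (hz : QCommute q d x z)
    (hz_unit : IsUnit z) : QCommute q c x y := by
  refine hz_unit.mul_right_cancel ?_
  rw [mul_assoc, hyz.mul_eq_smul, smul_mul_assoc, smul_mul_assoc, mul_assoc, mul_assoc,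
    hz.mul_eq_smul, mul_smul_comm, smul_smul, zpow_add]

theorem of_isUnit_mul (hyz : QCommute q (c + d) x (y * z)) (hy : QCommute q c x y)
    (hy_unit : IsUnit y) : QCommute q d x z := by
  refine hy_unit.mul_left_cancel ?_
  have hswap : y * x = q ^ (-c) • (x * y) := hy.symm.mul_eq_smul
  rw [← mul_assoc, hswap, smul_mul_assoc, mul_assoc, hyz.mul_eq_smul, smul_smul, ← zpow_add,
    neg_add_cancel_left, smul_mul_assoc, mul_smul_comm, mul_assoc]

theorem inverse_right (h : QCommute q c x y) (hy : IsUnit y) :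
    QCommute q (-c) x (Ring.inverse y) := by
  refine of_isUnit_mul ?_ h hy
  rw [Ring.mul_inverse_cancel _ hy, add_neg_cancel]
  exact one_right q x

theorem of_smul_isUnit {k : K} (h : QCommute q c x (k • y)) (hk : IsUnit k) : QCommute q c x y := by
  obtain ⟨u, rfl⟩ := hk
  simpa [smul_smul] using h.smul_right (↑u⁻¹ : K)

theorem map {L S : Type*} [CommRing L] [Ring S] [Algebra L S] (σ : K →+* L) (φ : R →+* S)
    (hφ : ∀ (k : K) (z : R), φ (k • z) = σ k • φ z) (h : QCommute q c x y) :
    QCommute (Units.map (σ : K →* L) q) c (φ x) (φ y) := by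
  have hzpow : φ (q ^ c • y) = Units.map (σ : K →* L) q ^ c • φ y := by
    rw [Units.smul_def, hφ, ← map_zpow]
    rfl
  rw [QCommute, ← hzpow]
  exact SemiconjBy.map h φ

end QCommute

end QCommute

section System

variable {K R : Type*} [CommRing K] [Ring R] [Algebra K R] {q : Kˣ} {M : ℕ → ℤ → R} {N a b : ℕ}

/-- The commutation relations between neighbouring times at the levels `a` and `b` of a family.
The exponent `a` in place of `min a b` makes this the expected relation for `a ≤ b` only. -/
def QCommuteNearby (q : Kˣ) (M : ℕ → ℤ → R) (a b : ℕ) : Prop :=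
  ∀ m n : ℤ, |n - m| ≤ 1 → QCommute q ((n - m) * a) (M a m) (M b n)

namespace QCommuteNearby

protected theorem mul_comm (h : QCommuteNearby q M a b) (n : ℤ) : M a n * M b n = M b n * M a n :=
  ((h n n (by simp)).congr_exponent (by ring)).mul_eq_mul

theorem mul_succ (h : QCommuteNearby q M a b) {m n : ℤ} (hn : n = m + 1) :
    M a m * M b n = (q : K) ^ a • (M b n * M a m) :=
  ((h m n (by simp [hn])).congr_exponent (by rw [hn]; ring)).mul_eq_pow_smul

theorem succ_mul (h : QCommuteNearby q M a b) {m n : ℤ} (hn : n = m + 1) :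
    M b m * M a n = (q : K) ^ a • (M a n * M b m) :=
  ((h n m (by simp [hn])).symm.congr_exponent (by rw [hn]; ring)).mul_eq_pow_smul

theorem of_commute_of_succ (hcomm : ∀ n, M a n * M b n = M b n * M a n)
    (hsucc : ∀ n, M a n * M b (n + 1) = (q : K) ^ a • (M b (n + 1) * M a n))
    (hpred : ∀ n, M b n * M a (n + 1) = (q : K) ^ a • (M a (n + 1) * M b n)) :
    QCommuteNearby q M a b := by
  have of_eq {x y : R} (h : x * y = (q : K) ^ a • (y * x)) : QCommute q a x y := by
    simpa [QCommute, SemiconjBy, Units.smul_def] using h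
  intro m n hmn
  obtain rfl | rfl | rfl : n = m ∨ n = m + 1 ∨ m = n + 1 := by rw [abs_le] at hmn; omega
  · simpa [QCommute, SemiconjBy] using hcomm n
  · exact (of_eq (hsucc m)).congr_exponent (by ring)
  · exact (of_eq (hpred n)).symm.congr_exponent (by ring)

end QCommuteNearby

/-- The part of a quantum M-system involving only the levels `0, …, N`: the level `N + 1` is not
required to vanish, and only the commutation relations between neighbouring times are imposed.
The exchange relation at level `α = a + 1` is written without subtraction of levels. -/
structure IsQuantumMSystem (q : Kˣ) (N : ℕ) (M : ℕ → ℤ → R) : Prop where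
  zero : ∀ n, M 0 n = 1
  isUnit : ∀ {a : ℕ} (n : ℤ), a ≤ N → IsUnit (M a n)
  qcommute : ∀ {a b : ℕ}, a ≤ b → b ≤ N → QCommuteNearby q M a b
  exchange : ∀ {a : ℕ} (n : ℤ), a + 2 ≤ N →
    (q : K) ^ (a + 1) • (M (a + 1) (n + 1) * M (a + 1) (n - 1)) =
      M (a + 1) n * M (a + 1) n - M (a + 2) n * M a n

namespace IsQuantumMSystem

variable (H : IsQuantumMSystem q N M)
include H

theorem exchange_reverse (n : ℤ) (ha : a + 2 ≤ N) :
    M (a + 1) (n - 1) * M (a + 1) (n + 1) =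
      (q : K) ^ (a + 1) • (M (a + 1) n * M (a + 1) n) - (q : K) ^ a • (M (a + 2) n * M a n) := by
  have hn : n = n - 1 + 1 := by ring
  have exchange := H.exchange n ha
  have comm_mid := (H.qcommute le_rfl (by omega : a + 1 ≤ N)).mul_succ hn
  have comm_low := (H.qcommute (a.le_add_right 1) (by omega)).succ_mul hn
  have comm_high := (H.qcommute (by omega : a + 1 ≤ a + 2) ha).mul_succ hn
  refine (H.isUnit (n - 1) (by omega : a + 1 ≤ N)).mul_right_cancel ?_
  refine (q.isUnit.pow (a + 1)).smul_left_cancel.1 ?_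
  linear_combination
    (norm := (simp only [mul_sub, sub_mul, smul_mul_assoc, mul_smul_comm, mul_assoc]; module))
    M (a + 1) (n - 1) * exchange + comm_mid * M (a + 1) n
      + (q : K) ^ (a + 1) • (M (a + 1) n * comm_mid) - comm_high * M a n
      - (q : K) ^ (a + 1) • (M (a + 2) n * comm_low)

theorem qcommute_succ_mul_pred {g : R} {c : ℤ} {n : ℤ} (ha : a + 2 ≤ N)
    (hlow : QCommute q (c * a) g (M a n)) (hmid : QCommute q (c * (a + 1)) g (M (a + 1) n))
    (hhigh : QCommute q (c * (a + 2)) g (M (a + 2) n)) :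
    QCommute q (2 * c * (a + 1)) g (M (a + 1) (n + 1) * M (a + 1) (n - 1)) := by
  refine QCommute.of_smul_isUnit ?_ (q.isUnit.pow (a + 1))
  rw [H.exchange n ha]
  exact ((hmid.mul_right hmid).congr_exponent (by ring)).sub_right
    ((hhigh.mul_right hlow).congr_exponent (by ring))

theorem qcommute_add (hb : b ≤ N) (n : ℤ) (p : ℕ) (hab : a ≤ b) (hp : p ≤ b - a + 1) :
    QCommute q (p * a) (M b n) (M a (n + p)) := by
  induction p using Nat.twoStepInduction generalizing a with
  | zero => exact (H.qcommute hab hb _ _ (by simp)).symm.congr_exponent (by push_cast; ring)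
  | one => exact (H.qcommute hab hb _ _ (by simp)).symm.congr_exponent (by push_cast; ring)
  | more p ih ih' =>
    obtain _ | a := a
    · exact H.zero _ ▸ (QCommute.one_right q _).congr_exponent (by simp)
    have hmul := H.qcommute_succ_mul_pred (by omega) (ih' (a := a) (by omega) (by omega))
      (mod_cast ih' (a := a + 1) (by omega) (by omega))
      (mod_cast ih' (a := a + 2) (by omega) (by omega))
    rw [show n + ((p + 1 : ℕ) : ℤ) - 1 = n + p by push_cast; ring, add_assoc] at hmul
    exact (hmul.congr_exponent (by push_cast; ring)).of_mul_isUnit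
      (ih (by omega) (by omega)) (H.isUnit _ (by omega))

theorem qcommute_sub (hb : b ≤ N) (n : ℤ) (p : ℕ) (hab : a ≤ b) (hp : p ≤ b - a + 1) :
    QCommute q (-p * a) (M b n) (M a (n - p)) := by
  induction p using Nat.twoStepInduction generalizing a with
  | zero => exact (H.qcommute hab hb _ _ (by simp)).symm.congr_exponent (by push_cast; ring)
  | one => exact (H.qcommute hab hb _ _ (by simp)).symm.congr_exponent (by push_cast; ring)
  | more p ih ih' =>
    obtain _ | a := a
    · exact H.zero _ ▸ (QCommute.one_right q _).congr_exponent (by simp)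
    have hmul := H.qcommute_succ_mul_pred (by omega) (ih' (a := a) (by omega) (by omega))
      (mod_cast ih' (a := a + 1) (by omega) (by omega))
      (mod_cast ih' (a := a + 2) (by omega) (by omega))
    rw [show n - ((p + 1 : ℕ) : ℤ) + 1 = n - p by push_cast; ring, sub_sub] at hmul
    exact (hmul.congr_exponent (by push_cast; ring)).of_isUnit_mul
      (ih (by omega) (by omega)) (H.isUnit _ (by omega))

theorem qcommute_of_abs_sub_le {m n : ℤ} (hab : a ≤ b) (hb : b ≤ N) (h : |n - m| ≤ b - a + 1) :
    QCommute q ((n - m) * a) (M a m) (M b n) := by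
  refine QCommute.congr_exponent (c := -((m - n) * a)) (QCommute.symm ?_) (by ring)
  obtain hmn | hnm := le_total n m
  · obtain ⟨p, rfl⟩ := Int.le.dest hmn
    exact (H.qcommute_add hb n p hab (by rw [abs_le] at h; omega)).congr_exponent (by ring)
  · obtain ⟨p, rfl⟩ : ∃ p : ℕ, m = n - p := ⟨(n - m).toNat, by omega⟩
    exact (H.qcommute_sub hb n p hab (by rw [abs_le] at h; omega)).congr_exponent (by ring)

theorem map {L S : Type*} [CommRing L] [Ring S] [Algebra L S] (σ : K →+* L) (φ : R →+* S)
    (hφ : ∀ (k : K) (x : R), φ (k • x) = σ k • φ x) :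
    IsQuantumMSystem (Units.map (σ : K →* L) q) N fun a n => φ (M a n) where
  zero n := by rw [H.zero, map_one]
  isUnit n ha := (H.isUnit n ha).map φ
  qcommute hab hb m n hmn := (H.qcommute hab hb m n hmn).map σ φ hφ
  exchange n ha := by
    simpa only [hφ, map_mul, map_sub, map_pow, Units.coe_map] using! congrArg φ (H.exchange n ha)

end IsQuantumMSystem

end System

section Darboux

variable {K R : Type*} [CommRing K] [Ring R] [Algebra K R] {q : Kˣ} {M : ℕ → ℤ → R} {N a b : ℕ}

/-- The quotient `(M a m)⁻¹ * M (a + 1) n` of elements on consecutive levels. Its commutation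
exponents with lower levels depend on `n - m` only, whereas those of `M a m` depend on `m`. -/
noncomputable def levelQuotient (M : ℕ → ℤ → R) (a : ℕ) (m n : ℤ) : R :=
  Ring.inverse (M a m) * M (a + 1) n

/-- The Darboux transform of a family with parameter `t`. On the first level it is
`M 1 n - t • M 1 (n - 1)`, and it turns a quantum M-system into one with a level less. -/
noncomputable def darboux (t : K) (M : ℕ → ℤ → R) : ℕ → ℤ → R
  | 0, _ => 1
  | a + 1, n => darboux t M a n * levelQuotient M a n n -
      t • (darboux t M a (n + 1) * levelQuotient M a n (n - 1))

theorem inverse_map_of_isUnit {S : Type*} [Ring S] (φ : R →+* S) {x : R} (hx : IsUnit x) :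
    Ring.inverse (φ x) = φ (Ring.inverse x) := by
  obtain ⟨u, rfl⟩ := hx
  rw [Ring.inverse_unit]
  exact Ring.inverse_unit (Units.map (φ : R →* S) u)

variable (t : K)

local notation "𝒟" => darboux t M

theorem darboux_succ (a : ℕ) (n : ℤ) :
    𝒟 (a + 1) n = 𝒟 a n * levelQuotient M a n n - t • (𝒟 a (n + 1) * levelQuotient M a n (n - 1)) :=
  rfl

/-- A second recursion for the Darboux transform, dividing by level `a` at time `n` instead of
`n + 1`. -/
def IsForwardDarboux (q : Kˣ) (t : K) (M : ℕ → ℤ → R) (a : ℕ) : Prop :=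
  ∀ n : ℤ, (q : K) ^ a • (darboux t M (a + 1) (n + 1) * M a n) =
    darboux t M a n * M (a + 1) (n + 1) -
      ((q : K) ^ a * t) • (darboux t M a (n + 1) * M (a + 1) n)

namespace IsQuantumMSystem

variable (H : IsQuantumMSystem q N M)
include H

theorem levelQuotient_mul_self (n : ℤ) (ha : a + 1 ≤ N) :
    levelQuotient M a n n * M a n = M (a + 1) n := by
  rw [levelQuotient, mul_assoc, ← (H.qcommute (a.le_add_right 1) ha).mul_comm, ← mul_assoc,
    Ring.inverse_mul_cancel _ (H.isUnit n (by omega)), one_mul]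

theorem levelQuotient_pred_mul (n : ℤ) (ha : a + 1 ≤ N) :
    levelQuotient M a n (n - 1) * M a n = (q : K) ^ a • M (a + 1) (n - 1) := by
  rw [levelQuotient, mul_assoc,
    (H.qcommute (a.le_add_right 1) ha).succ_mul (sub_add_cancel n 1).symm, mul_smul_comm,
    ← mul_assoc, Ring.inverse_mul_cancel _ (H.isUnit n (by omega)), one_mul]

theorem smul_levelQuotient_succ_mul (n : ℤ) (ha : a + 1 ≤ N) :
    (q : K) ^ a • (levelQuotient M a n (n + 1) * M a n) = M (a + 1) (n + 1) := by
  rw [levelQuotient, mul_assoc, ← mul_smul_comm, ← (H.qcommute (a.le_add_right 1) ha).mul_succ rfl,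
    ← mul_assoc, Ring.inverse_mul_cancel _ (H.isUnit n (by omega)), one_mul]

theorem mul_levelQuotient_sub (n : ℤ) (ha : a + 2 ≤ N) :
    M (a + 1) n * levelQuotient M a n n -
      (q : K) • (M (a + 1) (n + 1) * levelQuotient M a n (n - 1)) = M (a + 2) n := by
  refine (H.isUnit n (by omega : a ≤ N)).mul_right_cancel ?_
  rw [sub_mul, smul_mul_assoc, mul_assoc, mul_assoc, H.levelQuotient_mul_self n (by omega),
    H.levelQuotient_pred_mul n (by omega), mul_smul_comm, smul_smul, ← pow_succ', H.exchange n ha,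
    sub_sub_cancel]

theorem darboux_succ_mul (n : ℤ) (ha : a + 1 ≤ N) :
    𝒟 (a + 1) n * M a n =
      𝒟 a n * M (a + 1) n - (t * (q : K) ^ a) • (𝒟 a (n + 1) * M (a + 1) (n - 1)) := by
  rw [darboux_succ, sub_mul, smul_mul_assoc, mul_assoc, mul_assoc, H.levelQuotient_mul_self n ha,
    H.levelQuotient_pred_mul n ha, mul_smul_comm, smul_smul]

variable {t}

theorem darboux_mul_self (hF : IsForwardDarboux q t M a) (n : ℤ) (ha : a + 2 ≤ N) :
    𝒟 (a + 1) n * M (a + 1) n =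
      𝒟 a n * M (a + 2) n + (q : K) ^ (a + 1) • (𝒟 (a + 1) (n + 1) * M (a + 1) (n - 1)) := by
  have hn : n = n - 1 + 1 := by ring
  have backward := H.darboux_succ_mul t n (by omega : a + 1 ≤ N)
  have comm := (H.qcommute (a.le_add_right 1) (by omega)).mul_comm n
  have comm_low := (H.qcommute (a.le_add_right 1) (by omega)).succ_mul hn
  have comm_mid := (H.qcommute le_rfl (by omega : a + 1 ≤ N)).mul_succ hn
  refine (H.isUnit n (by omega : a ≤ N)).mul_right_cancel ?_
  linear_combination
    (norm := (simp only [add_mul, mul_sub, sub_mul, smul_mul_assoc, mul_smul_comm, mul_assoc]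
              module))
    backward * M (a + 1) n - 𝒟 (a + 1) n * comm
      - (q : K) ^ (a + 1) • (𝒟 (a + 1) (n + 1) * comm_low)
      - (q : K) ^ (a + 1) • (hF n * M (a + 1) (n - 1))
      - 𝒟 a n * H.exchange n ha - (t * (q : K) ^ a) • (𝒟 a (n + 1) * comm_mid)

theorem darboux_mul_succ (hF : IsForwardDarboux q t M a) (n : ℤ) (ha : a + 2 ≤ N) :
    𝒟 (a + 1) n * M (a + 1) (n + 1) =
      ((q : K) ^ a * t) • (𝒟 a (n + 1) * M (a + 2) n) +
        (q : K) ^ (a + 1) • (𝒟 (a + 1) (n + 1) * M (a + 1) n) := by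
  have backward := H.darboux_succ_mul t n (by omega : a + 1 ≤ N)
  have comm := (H.qcommute (a.le_add_right 1) (by omega)).mul_comm n
  have comm_low := (H.qcommute (a.le_add_right 1) (by omega)).mul_succ (rfl : n + 1 = _)
  have comm_mid := (H.qcommute le_rfl (by omega : a + 1 ≤ N)).mul_succ (rfl : n + 1 = _)
  refine (H.isUnit n (by omega : a ≤ N)).mul_right_cancel ?_
  refine (q.isUnit.pow a).smul_left_cancel.1 ?_
  linear_combination
    (norm := (simp only [add_mul, mul_sub, sub_mul, smul_mul_assoc, mul_smul_comm, mul_assoc]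
              module))
    backward * M (a + 1) (n + 1) - 𝒟 (a + 1) n * comm_low
      + (q : K) ^ (2 * a + 1) • (𝒟 (a + 1) (n + 1) * comm)
      - (q : K) ^ (a + 1) • (hF n * M (a + 1) n)
      + 𝒟 a n * comm_mid - (t * (q : K) ^ a) • (𝒟 a (n + 1) * H.exchange_reverse n ha)

theorem isForwardDarboux_succ (hF : IsForwardDarboux q t M a) (ha : a + 2 ≤ N) :
    IsForwardDarboux q t M (a + 1) := by
  intro n
  have backward : 𝒟 (a + 2) (n + 1) * _ = _ := H.darboux_succ_mul t (n + 1) ha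
  have mul_self := H.darboux_mul_self hF (n + 1) ha
  rw [add_sub_cancel_right] at backward mul_self
  have comm_mid := (H.qcommute le_rfl (by omega : a + 1 ≤ N)).mul_succ (rfl : n + 1 = _)
  have comm_high := (H.qcommute le_rfl ha).mul_succ (rfl : n + 1 = _)
  have hlevels := H.qcommute (by omega : a + 1 ≤ a + 2) ha
  refine (H.isUnit (n + 1) (by omega : a + 1 ≤ N)).mul_right_cancel ?_
  linear_combination
    (norm := (simp only [add_mul, sub_mul, smul_mul_assoc, mul_smul_comm, mul_assoc]
              module))
    (q : K) ^ (a + 1) • (𝒟 (a + 2) (n + 1) * comm_mid)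
      + (q : K) ^ (2 * a + 2) • (backward * M (a + 1) n)
      - (q : K) ^ (a + 1) • (𝒟 (a + 1) (n + 1) * hlevels.mul_succ (rfl : n + 1 = _))
      + (t * (q : K) ^ (3 * a + 3)) • (𝒟 (a + 1) (n + 1 + 1) * hlevels.mul_comm n)
      + 𝒟 (a + 1) n * hlevels.mul_comm (n + 1)
      + ((q : K) ^ (a + 1) * t) • (𝒟 (a + 1) (n + 1) * hlevels.succ_mul (rfl : n + 1 = _))
      - H.darboux_mul_succ hF n ha * M (a + 2) (n + 1)
      + ((q : K) ^ (2 * a + 2) * t) • (mul_self * M (a + 2) n)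
      - ((q : K) ^ a * t) • (𝒟 a (n + 1) * comm_high)

theorem isForwardDarboux (ha : a + 1 ≤ N) : IsForwardDarboux q t M a := by
  induction a with
  | zero => intro n; simp [darboux, levelQuotient, H.zero]
  | succ a ih => exact H.isForwardDarboux_succ (ih (by omega)) ha

theorem darboux_succ_succ (n : ℤ) (ha : a + 1 ≤ N) :
    𝒟 (a + 1) (n + 1) =
      𝒟 a n * levelQuotient M a n (n + 1) - t • (𝒟 a (n + 1) * levelQuotient M a n n) := by
  refine (H.isUnit n (by omega : a ≤ N)).mul_right_cancel ?_
  refine (q.isUnit.pow a).smul_left_cancel.1 ?_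
  rw [H.isForwardDarboux ha n, sub_mul, smul_sub, smul_mul_assoc, mul_assoc, mul_assoc,
    H.levelQuotient_mul_self n ha, ← mul_smul_comm _ (𝒟 a n),
    H.smul_levelQuotient_succ_mul n ha, smul_smul]

/-- Only the elements `M i k` with `m - 1 ≤ k ≤ m + (a - i)` occur in `darboux t M a m`. -/
theorem qcommute_darboux {g : R} {c : ℤ} (m : ℤ) (ha : a ≤ N)
    (hg : ∀ (i : ℕ) (k : ℤ), i ≤ a → m - 1 ≤ k → k ≤ m + (a - i) → QCommute q (c * i) g (M i k)) :
    QCommute q (c * a) g (𝒟 a m) := by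
  induction a generalizing m with
  | zero => exact (QCommute.one_right q g).congr_exponent (by simp)
  | succ a ih =>
    have hinv := (hg a m (by omega) (by omega) (by omega)).inverse_right (H.isUnit m (by omega))
    have hquot (k : ℤ) (hk : m - 1 ≤ k) (hk' : k ≤ m) : QCommute q c g (levelQuotient M a m k) :=
      (hinv.mul_right (hg (a + 1) k le_rfl hk (by omega))).congr_exponent (by push_cast; ring)
    have hself := ih m (by omega) fun i k hi hk hk' => hg i k (by omega) hk (by omega)
    have hsucc := ih (m + 1) (by omega) fun i k hi hk hk' =>
      hg i k (by omega) (by omega) (by omega)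
    exact ((hself.mul_right (hquot m (by omega) le_rfl)).sub_right
      ((hsucc.mul_right (hquot (m - 1) le_rfl (by omega))).smul_right t)).congr_exponent
        (by push_cast; ring)

theorem qcommute_darboux_levelQuotient (m : ℤ) {x y : ℤ} (hab : a ≤ b) (hb : b + 1 ≤ N)
    (hy : m - 1 ≤ y) (hy' : y ≤ m) (hxy : |x - y| ≤ 1) :
    QCommute q ((x - y) * a) (𝒟 a m) (levelQuotient M b y x) := by
  refine (H.qcommute_darboux (c := y - x) m (by omega) fun i k hi hk hk' => ?_).symm.congr_exponent
    (by ring)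
  have hlow : QCommute q ((y - k) * i) (M i k) (M b y) :=
    H.qcommute_of_abs_sub_le (by omega) (by omega) (by rw [abs_le] at *; omega)
  have hhigh : QCommute q ((x - k) * i) (M i k) (M (b + 1) x) :=
    H.qcommute_of_abs_sub_le (by omega) hb (by rw [abs_le] at *; omega)
  exact ((hlow.inverse_right (H.isUnit y (by omega))).mul_right hhigh).symm.congr_exponent
    (by ring)

theorem qcommuteNearby_darboux_succ (hab : a ≤ b) (hb : b + 1 ≤ N)
    (h : QCommuteNearby q 𝒟 a b) : QCommuteNearby q 𝒟 a (b + 1) := by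
  intro m n hmn
  obtain hn | rfl : n ≤ m ∨ n = m + 1 := by rw [abs_le] at hmn; omega
  · have hquot (x : ℤ) (hx : |x - n| ≤ 1) := H.qcommute_darboux_levelQuotient (t := t) m hab hb
      (by rw [abs_le] at hmn; omega) hn hx
    exact (((h m n hmn).mul_right (hquot n (by simp))).congr_exponent (by ring)).sub_right
      ((((h m (n + 1) (by rw [abs_le] at *; omega)).mul_right
        (hquot (n - 1) (by simp))).congr_exponent (by ring)).smul_right t)
  · rw [H.darboux_succ_succ m hb]
    have hquot (x : ℤ) (hx : |x - m| ≤ 1) := H.qcommute_darboux_levelQuotient (t := t) m hab hb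
      (by omega) le_rfl hx
    exact (((h m m (by simp)).mul_right (hquot (m + 1) (by simp))).congr_exponent
      (by ring)).sub_right ((((h m (m + 1) hmn).mul_right (hquot m (by simp))).congr_exponent
        (by ring)).smul_right t)

theorem darboux_succ_mul_darboux_succ (hself : QCommuteNearby q 𝒟 a a)
    (hsucc : QCommuteNearby q 𝒟 a (a + 1)) (n : ℤ) (ha : a + 2 ≤ N) :
    𝒟 (a + 1) n * 𝒟 (a + 1) (n + 1) = (q : K) ^ (a + 1) • (𝒟 (a + 1) (n + 1) * 𝒟 (a + 1) n) := by
  have hF := H.isForwardDarboux (t := t) (by omega : a + 1 ≤ N)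
  have backward := H.darboux_succ_mul t n (by omega : a + 1 ≤ N)
  have comm_succ := hsucc.mul_succ (rfl : n + 1 = _)
  have succ_comm := hsucc.succ_mul (rfl : n + 1 = _)
  have comm_low := hself.mul_succ (rfl : n + 1 = _)
  refine (H.isUnit n (by omega : a ≤ N)).mul_right_cancel ?_
  refine (q.isUnit.pow a).smul_left_cancel.1 ?_
  linear_combination
    (norm := (simp only [mul_add, mul_sub, smul_mul_assoc, mul_smul_comm, mul_assoc]
              module))
    𝒟 (a + 1) n * hF n - (q : K) ^ (2 * a + 1) • (𝒟 (a + 1) (n + 1) * backward)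
      - hsucc.mul_comm n * M (a + 1) (n + 1)
      - ((q : K) ^ a * t) • (succ_comm * M (a + 1) n)
      + (q : K) ^ (a + 1) • (comm_succ * M (a + 1) n)
      - ((q : K) ^ (3 * a + 1) * t) • (hsucc.mul_comm (n + 1) * M (a + 1) (n - 1))
      + 𝒟 a n * H.darboux_mul_succ hF n ha
      - ((q : K) ^ (2 * a) * t) • (𝒟 a (n + 1) * H.darboux_mul_self hF n ha)
      + ((q : K) ^ a * t) • (comm_low * M (a + 2) n)

theorem qcommuteNearby_darboux (hab : a ≤ b) (hb : b + 1 ≤ N) : QCommuteNearby q 𝒟 a b := by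
  induction b generalizing a with
  | zero =>
    obtain rfl : a = 0 := by omega
    exact fun m n _ => (QCommute.one_right q 1).congr_exponent (by simp)
  | succ b ih =>
    obtain hab | rfl : a ≤ b ∨ a = b + 1 := by omega
    · exact H.qcommuteNearby_darboux_succ hab (by omega) (ih hab (by omega))
    · have hself : QCommuteNearby q 𝒟 b b := ih le_rfl (by omega)
      have hsucc := H.darboux_succ_mul_darboux_succ hself
        (H.qcommuteNearby_darboux_succ le_rfl (by omega) hself) (ha := hb)
      exact .of_commute_of_succ (fun _ => rfl) hsucc hsucc

theorem darboux_exchange (n : ℤ) (ha : a + 3 ≤ N) :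
    (q : K) ^ (a + 1) • (𝒟 (a + 1) (n + 1) * 𝒟 (a + 1) (n - 1)) =
      𝒟 (a + 1) n * 𝒟 (a + 1) n - 𝒟 (a + 2) n * 𝒟 a n := by
  have hF := H.isForwardDarboux (t := t) (by omega : a + 1 ≤ N)
  have backward : 𝒟 (a + 2) n * _ = _ := H.darboux_succ_mul t n (by omega : a + 2 ≤ N)
  have mul_succ := H.darboux_mul_succ hF (n - 1) (by omega)
  rw [sub_add_cancel] at mul_succ
  have comm_mid := H.qcommuteNearby_darboux (t := t) (a.le_add_right 1) (by omega)
  have comm_high := H.qcommuteNearby_darboux (t := t) (a.le_add_right 2) (by omega)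
  have comm_self := H.qcommuteNearby_darboux (t := t) (le_refl (a + 1)) (by omega)
  refine (H.isUnit n (by omega : a + 1 ≤ N)).mul_right_cancel ?_
  linear_combination
    (norm := (simp only [mul_add, mul_sub, sub_mul, smul_mul_assoc, mul_smul_comm, mul_assoc]
              module))
    (q : K) ^ (a + 1) • (𝒟 (a + 1) (n + 1) * mul_succ)
      - 𝒟 (a + 1) n * H.darboux_mul_self hF n (by omega)
      - comm_high.mul_comm n * M (a + 1) n + 𝒟 a n * backward
      + comm_mid.mul_comm n * M (a + 2) n
      - (q : K) ^ (a + 1) • (comm_self.mul_succ (rfl : n + 1 = _) * M (a + 1) (n - 1))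
      - ((q : K) ^ (a + 1) * t) • (comm_mid.mul_succ (rfl : n + 1 = _) * M (a + 2) (n - 1))

end IsQuantumMSystem

protected theorem IsQuantumMSystem.darboux (H : IsQuantumMSystem q (N + 1) M)
    (hunit : ∀ {a : ℕ} (n : ℤ), a ≤ N → IsUnit (𝒟 a n)) : IsQuantumMSystem q N 𝒟 where
  zero _ := rfl
  isUnit := hunit
  qcommute hab hb := H.qcommuteNearby_darboux hab (by omega)
  exchange n ha := H.darboux_exchange n (by omega)

end Darboux

section FirstRow

open Finset

theorem sum_powerset_map {ι κ A : Type*} [AddCommMonoid A] (e : ι ↪ κ) (s : Finset ι)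
    (F : Finset κ → A) : ∑ U ∈ (s.map e).powerset, F U = ∑ V ∈ s.powerset, F (V.map e) := by
  have hpowerset : (s.map e).powerset = s.powerset.map (mapEmbedding e).toEmbedding := by
    ext U
    simp [subset_map_iff, eq_comm]
  rw [hpowerset, sum_map]
  rfl

theorem sum_powerset_disjSum {ι κ A : Type*} [AddCommMonoid A] (s : Finset ι) (t : Finset κ)
    (F : Finset (ι ⊕ κ) → A) :
    ∑ U ∈ (s.disjSum t).powerset, F U =
      ∑ S ∈ s.powerset, ∑ T ∈ t.powerset, F (S.disjSum T) := by
  rw [← sum_product']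
  refine sum_equiv sumEquiv.toEquiv (fun U => ?_) fun U _ => ?_
  · simp only [mem_product, mem_powerset]
    exact sumEquiv.le_symm_apply (y := (s, t))
  · exact congrArg F toLeft_disjSum_toRight.symm

/-- The pairs of indices in `Fin (α + 1)` used by `qvPairs`: a pair of indices in `Fin α` is
shifted by one, and an index `b` in `Fin α` stands for the pair `(0, b + 1)`. -/
def consPair (α : ℕ) : (Fin α × Fin α) ⊕ Fin α ↪ Fin (α + 1) × Fin (α + 1) where
  toFun := Sum.elim (Prod.map Fin.succ Fin.succ) fun b => (0, b.succ)
  inj' := by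
    rintro (⟨a, b⟩ | b) (⟨a', b'⟩ | b') h <;> simp_all [Fin.succ_ne_zero, eq_comm]

variable {α : ℕ}

theorem consPair_inl (p : Fin α × Fin α) : consPair α (.inl p) = (p.1.succ, p.2.succ) := rfl

theorem consPair_inr (b : Fin α) : consPair α (.inr b) = (0, b.succ) := rfl

theorem qvPairs_succ (α : ℕ) :
    qvPairs (α + 1) = ((qvPairs α).disjSum univ).map (consPair α) := by
  ext ⟨a, b⟩
  cases a using Fin.cases <;> cases b using Fin.cases <;>
    simp [qvPairs, consPair_inl, consPair_inr, (Fin.succ_ne_zero _).symm]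

theorem qvExp_consPair_zero (S : Finset (Fin α × Fin α)) (T : Finset (Fin α)) :
    qvExp (α + 1) ((S.disjSum T).map (consPair α)) 0 = -#T := by
  simp only [qvExp, card_filter, sum_map, sum_disjSum, consPair_inl, consPair_inr]
  simp

theorem qvExp_consPair_succ (S : Finset (Fin α × Fin α)) (T : Finset (Fin α)) (i : Fin α) :
    qvExp (α + 1) ((S.disjSum T).map (consPair α)) i.succ =
      qvExp α S i + if i ∈ T then 1 else 0 := by
  simp only [qvExp, card_filter, sum_map, sum_disjSum, consPair_inl, consPair_inr, Fin.succ_inj]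
  simp [(Fin.succ_ne_zero _).symm, add_sub_right_comm]

theorem sum_powerset_qvPairs_succ {A : Type*} [AddCommMonoid A] (α : ℕ)
    (F : Finset (Fin (α + 1) × Fin (α + 1)) → A) :
    ∑ U ∈ (qvPairs (α + 1)).powerset, F U =
      ∑ S ∈ (qvPairs α).powerset, ∑ T, F ((S.disjSum T).map (consPair α)) := by
  rw [qvPairs_succ, sum_powerset_map, sum_powerset_disjSum, powerset_univ]

theorem qDet_succ {R : Type*} [Ring R] (q : R) (f : ℤ → R) (α : ℕ) (n : ℤ) :
    qDet q f (α + 1) n =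
      ∑ S ∈ (qvPairs α).powerset, ∑ T, (-q) ^ #S * ((-q) ^ #T * (f (n + #T) *
        (List.ofFn (T.piecewise (fun i => f (n - qvExp α S i - 1))
          fun i => f (n - qvExp α S i))).prod)) := by
  rw [qDet, sum_powerset_qvPairs_succ]
  refine sum_congr rfl fun S _ => sum_congr rfl fun T _ => ?_
  rw [card_map, card_disjSum, pow_add, mul_assoc, List.ofFn_succ, List.prod_cons,
    qvExp_consPair_zero, sub_neg_eq_add]
  congr! 4
  refine congrArg List.ofFn (funext fun i => ?_)
  rw [qvExp_consPair_succ, Finset.piecewise]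
  split_ifs <;> ring_nf

theorem prod_ofFn_sub_smul {K A : Type*} [CommRing K] [Ring A] [Algebra K A] (t : K)
    (f g : Fin α → A) :
    (List.ofFn fun i => f i - t • g i).prod =
      ∑ T : Finset (Fin α), (-t) ^ #T • (List.ofFn (T.piecewise g f)).prod := by
  have hsum : (fun i => f i - t • g i) = (fun i => (-t) • g i) + f := by
    ext i
    simp [sub_eq_neg_add]
  simp only [← MultilinearMap.mkPiAlgebraFin_apply (R := K)]
  rw [hsum, MultilinearMap.map_add_univ]
  refine sum_congr rfl fun T _ => ?_
  rw [← prod_const, ← MultilinearMap.map_piecewise_smul]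
  congr 1
  ext i
  by_cases hi : i ∈ T <;> simp [hi]

end FirstRow

section PowerSeries

open PowerSeries Finset

variable {K R : Type*} [CommRing K] [Ring R] [Algebra K R] {q : Kˣ} {M : ℕ → ℤ → R} {N a : ℕ}

/-- The functional `X ^ i ↦ q ^ i • f (n + i)`, truncated at `i < k` and right linear over `R`.
It corresponds to the factor `f` of the row `0` in the expansion of `qDet` along that row. -/
noncomputable def rowFunctional (q : K) (f : ℤ → R) (n : ℤ) (k : ℕ) : R⟦X⟧ →ₗ[K] R :=
  ∑ i ∈ range k, q ^ i • (LinearMap.mulLeft K (f (n + i)) ∘ₗ (coeff i).restrictScalars K)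

theorem rowFunctional_apply (q : K) (f : ℤ → R) (n : ℤ) (k : ℕ) (P : R⟦X⟧) :
    rowFunctional q f n k P = ∑ i ∈ range k, q ^ i • (f (n + i) * coeff i P) := by
  simp [rowFunctional]

theorem rowFunctional_mul_C (q : K) (f : ℤ → R) (n : ℤ) (k : ℕ) (P : R⟦X⟧) (x : R) :
    rowFunctional q f n k (P * C x) = rowFunctional q f n k P * x := by
  simp [rowFunctional_apply, sum_mul, mul_assoc]

theorem rowFunctional_X_mul (q : K) (f : ℤ → R) (n : ℤ) (k : ℕ) (P : R⟦X⟧) :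
    rowFunctional q f n (k + 1) (X * P) = q • rowFunctional q f (n + 1) k P := by
  rw [rowFunctional_apply, sum_range_succ', rowFunctional_apply, smul_sum]
  simp [pow_succ', mul_smul, add_assoc, add_comm (1 : ℤ)]

theorem rowFunctional_X_pow (q : K) (f : ℤ → R) (n : ℤ) {j k : ℕ} (hj : j < k) :
    rowFunctional q f n k (X ^ j) = q ^ j • f (n + j) := by
  simp [rowFunctional_apply, coeff_X_pow, hj]

/-- The action of power series over `K` on power series over a noncommutative `K`-algebra. Mathlib
provides it for commutative algebras only. -/
@[reducible]
noncomputable def powerSeriesAlgebra (K R : Type*) [CommRing K] [Ring R] [Algebra K R] :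
    Algebra K⟦X⟧ R⟦X⟧ :=
  (PowerSeries.map (algebraMap K R)).toAlgebra' fun P Q => by
    ext n
    rw [coeff_mul, coeff_mul, ← Nat.sum_antidiagonal_swap]
    simp [Algebra.commutes]

attribute [local instance] powerSeriesAlgebra

theorem powerSeries_smul_eq (P : K⟦X⟧) (Q : R⟦X⟧) :
    P • Q = PowerSeries.map (algebraMap K R) P * Q := rfl

theorem C_smul_eq_smul (k : K) (P : R⟦X⟧) : C k • P = k • P := by
  ext n
  rw [powerSeries_smul_eq, map_C, coeff_C_mul, coeff_smul, Algebra.smul_def]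

theorem rowFunctional_neg_X_pow (q : K) (f : ℤ → R) (n : ℤ) {j k : ℕ} (hj : j < k) :
    rowFunctional q f n k ((-X) ^ j) = (-q) ^ j • f (n + j) := by
  obtain heven | hodd := j.even_or_odd
  · rw [heven.neg_pow, heven.neg_pow, rowFunctional_X_pow q f n hj]
  · rw [hodd.neg_pow, hodd.neg_pow, map_neg, rowFunctional_X_pow q f n hj, neg_smul]

theorem rowFunctional_qDet (q : K) (f : ℤ → R) (α : ℕ) (n : ℤ) :
    rowFunctional q f n (α + 1) (qDet (algebraMap K⟦X⟧ R⟦X⟧ (C q))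
      (fun m => C (f m) - (X : K⟦X⟧) • C (f (m - 1))) α n) =
    qDet (algebraMap K R q) f (α + 1) n := by
  rw [qDet_succ, qDet, map_sum]
  refine sum_congr rfl fun S _ => ?_
  simp only [← map_neg, ← map_pow, ← Algebra.smul_def]
  rw [C_smul_eq_smul, map_smul, prod_ofFn_sub_smul, map_sum, smul_sum]
  refine sum_congr rfl fun T _ => ?_
  have hT : #T < α + 1 := Nat.lt_succ_of_le (by simpa using card_le_univ T)
  have hprod (g h : Fin α → R) : (List.ofFn (T.piecewise (fun i => C (g i)) fun i => C (h i))).prod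
      = C (List.ofFn (T.piecewise g h)).prod := by
    rw [map_list_prod, List.map_ofFn]
    congr 2
    ext1 i
    by_cases hi : i ∈ T <;> simp [hi]
  rw [hprod, powerSeries_smul_eq, map_pow, map_neg, map_X, rowFunctional_mul_C,
    rowFunctional_neg_X_pow q f n hT, smul_mul_assoc]

/-- The Darboux transform with parameter `X` of the constant power series attached to `M`. -/
noncomputable def genericDarboux (K : Type*) {R : Type*} [CommRing K] [Ring R] [Algebra K R]
    (M : ℕ → ℤ → R) : ℕ → ℤ → R⟦X⟧ :=
  darboux (X : K⟦X⟧) fun a n => C (M a n)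

theorem genericDarboux_zero (M : ℕ → ℤ → R) (n : ℤ) : genericDarboux K M 0 n = 1 := rfl

namespace IsQuantumMSystem

theorem genericDarboux_succ (H : IsQuantumMSystem q N M) (n : ℤ) (ha : a ≤ N) :
    genericDarboux K M (a + 1) n = genericDarboux K M a n * C (levelQuotient M a n n) -
      X * (genericDarboux K M a (n + 1) * C (levelQuotient M a n (n - 1))) := by
  have hquot (k : ℤ) : levelQuotient (fun a n => (C (M a n) : R⟦X⟧)) a n k =
      C (levelQuotient M a n k) := by
    rw [levelQuotient, levelQuotient, map_mul, inverse_map_of_isUnit C (H.isUnit n ha)]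
  rw [genericDarboux, darboux_succ, hquot, hquot, powerSeries_smul_eq, map_X]

theorem genericDarboux_one (H : IsQuantumMSystem q N M) :
    genericDarboux K M 1 = fun m => C (M 1 m) - (X : K⟦X⟧) • C (M 1 (m - 1)) := by
  ext1 n
  simp [H.genericDarboux_succ n N.zero_le, genericDarboux_zero, levelQuotient, H.zero,
    powerSeries_smul_eq]

theorem constantCoeff_genericDarboux (H : IsQuantumMSystem q N M) (n : ℤ) (ha : a ≤ N) :
    constantCoeff (genericDarboux K M a n) = M a n := by
  induction a generalizing n with
  | zero => rw [genericDarboux_zero, map_one, H.zero]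
  | succ a ih =>
    have hunit : IsUnit (M a n) := H.isUnit n (by omega)
    simp [H.genericDarboux_succ n (by omega : a ≤ N), ih n (by omega), levelQuotient, ← mul_assoc,
      Ring.mul_inverse_cancel _ hunit]

theorem rowFunctional_genericDarboux (H : IsQuantumMSystem q N M) {k : ℕ} (n : ℤ) (ha : a + 1 ≤ N)
    (hk : a < k) : rowFunctional (q : K) (M 1) n k (genericDarboux K M a n) = M (a + 1) n := by
  induction a generalizing k n with
  | zero => simpa [genericDarboux_zero] using rowFunctional_X_pow (q : K) (M 1) n hk
  | succ a ih =>
    obtain _ | k := k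
    · omega
    rw [H.genericDarboux_succ n (by omega), map_sub, rowFunctional_mul_C, rowFunctional_X_mul,
      rowFunctional_mul_C, ih n (by omega) (by omega), ih (n + 1) (by omega) (by omega),
      H.mul_levelQuotient_sub n ha]

protected theorem genericDarboux (H : IsQuantumMSystem q (N + 1) M) :
    IsQuantumMSystem (Units.map ((C : K →+* K⟦X⟧) : K →* K⟦X⟧) q) N (genericDarboux K M) := by
  refine (H.map C C fun k x => ?_).darboux X fun n ha => ?_
  · rw [powerSeries_smul_eq, map_C, ← map_mul, Algebra.smul_def]
  · have ha' := Nat.le_succ_of_le ha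
    exact isUnit_iff_constantCoeff.2 (H.constantCoeff_genericDarboux n ha' ▸ H.isUnit n ha')

end IsQuantumMSystem

theorem qDet_zero {R : Type*} [Ring R] (q : R) (f : ℤ → R) (n : ℤ) : qDet q f 0 n = 1 := by
  simp [qDet, show qvPairs 0 = ∅ from rfl]

theorem IsQuantumMSystem.eq_qDet (H : IsQuantumMSystem q N M) (n : ℤ) (ha : a ≤ N) :
    M a n = qDet (algebraMap K R q) (M 1) a n := by
  induction N generalizing K R a with
  | zero => rw [Nat.le_zero.1 ha, qDet_zero, H.zero]
  | succ N ih =>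
    obtain _ | a := a
    · rw [qDet_zero, H.zero]
    rw [← H.rowFunctional_genericDarboux n ha a.lt_succ_self,
      ih H.genericDarboux (by omega : a ≤ N), H.genericDarboux_one]
    exact rowFunctional_qDet (q : K) (M 1) a n

end PowerSeries

theorem exists_units_center_map_eq {R : Type*} [Ring R] (u : Rˣ) (hu : ∀ x : R, u * x = x * u) :
    ∃ v : (Subring.center R)ˣ, ((v : Subring.center R) : R) = u := by
  have hinv (x : R) : (↑u⁻¹ : R) * x = x * ↑u⁻¹ := (Commute.units_inv_left (hu x)).eq
  exact ⟨⟨⟨u, Subring.mem_center_iff.2 fun x => (hu x).symm⟩,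
    ⟨↑u⁻¹, Subring.mem_center_iff.2 fun x => (hinv x).symm⟩,
    Subtype.ext u.mul_inv, Subtype.ext u.inv_mul⟩, rfl⟩

theorem quantum_Q_determinant_formula_general {R : Type*} [Ring R] (q : Rˣ)
    (hq : ∀ x : R, (q : R) * x = x * (q : R)) (N : ℕ) (M : ℕ → ℤ → R)
    (hM0 : ∀ n : ℤ, M 0 n = 1)
    (hunit : ∀ (α : ℕ) (n : ℤ), α ≤ N → IsUnit (M α n))
    (hMsys : ∀ (α : ℕ) (n : ℤ), 1 ≤ α → α < N →
      (q : R) ^ α * M α (n + 1) * M α (n - 1) = M α n ^ 2 - M (α + 1) n * M (α - 1) n)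
    (hcom : ∀ (α β ε : ℕ) (n : ℤ), ε ≤ 1 → α ≤ N → β ≤ N →
      M α n * M β (n + (ε : ℤ)) = (q : R) ^ (ε * min α β) * M β (n + (ε : ℤ)) * M α n)
    (α : ℕ) (n : ℤ) (hα : α ≤ N) : M α n = qDet (q : R) (M 1) α n := by
  obtain ⟨qc, hqc⟩ := exists_units_center_map_eq q hq
  simp only [← hqc] at hMsys hcom ⊢
  have hsmul (k : ℕ) (x : R) : (qc : Subring.center R) ^ k • x = (qc : R) ^ k * x := rfl
  have hcomm {a b : ℕ} (ha : a ≤ N) (hb : b ≤ N) (k : ℤ) : M a k * M b k = M b k * M a k := by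
    simpa using hcom a b 0 k zero_le_one ha hb
  have hsucc {a b : ℕ} (ha : a ≤ N) (hb : b ≤ N) (k : ℤ) :
      M a k * M b (k + 1) = (qc : Subring.center R) ^ min a b • (M b (k + 1) * M a k) := by
    simpa [hsmul, mul_assoc] using hcom a b 1 k le_rfl ha hb
  have hsystem : IsQuantumMSystem qc N M :=
    { zero := hM0
      isUnit := fun n ha => hunit _ n ha
      qcommute := fun hab hb => .of_commute_of_succ (hcomm (hab.trans hb) hb)
        (by simpa [hab] using hsucc (hab.trans hb) hb)
        (by simpa [hab] using hsucc hb (hab.trans hb))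
      exchange := fun n ha => by
        simpa [hsmul, mul_assoc, pow_two] using hMsys _ n (Nat.succ_pos _) ha }
  exact hsystem.eq_qDet n hα

theorem quantum_Q_determinant_formula
    {R : Type*} [Ring R] (q A Δ : Rˣ)
    (hq : ∀ x : R, (q : R) * x = x * (q : R))
    (r : ℕ) (hr : 1 ≤ r)
    (M Mi : ℕ → ℤ → R)
    (hM0 : ∀ n : ℤ, M 0 n = 1)
    (hMtop : ∀ n : ℤ, M (r + 2) n = 0)
    (hMiL : ∀ (α : ℕ) (n : ℤ), α ≤ r + 1 → M α n * Mi α n = 1)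
    (hMiR : ∀ (α : ℕ) (n : ℤ), α ≤ r + 1 → Mi α n * M α n = 1)
    (hMsys : ∀ (α : ℕ) (n : ℤ), 1 ≤ α → α ≤ r + 1 →
      (q : R) ^ α * M α (n + 1) * M α (n - 1) = M α n ^ 2 - M (α + 1) n * M (α - 1) n)
    (hcom : ∀ (α β ε : ℕ) (n : ℤ), ε ≤ 1 → α ≤ r + 1 → β ≤ r + 1 →
      M α n * M β (n + (ε : ℤ)) = (q : R) ^ (ε * min α β) * M β (n + (ε : ℤ)) * M α n)
    (hAΔ : ∀ n : ℤ, M (r + 1) n = ((A ^ n : Rˣ) : R) * (Δ : R))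
    (hΔM : ∀ (α : ℕ) (n : ℤ), 1 ≤ α → α ≤ r + 1 →
      (Δ : R) * M α n = ((q ^ ((α : ℤ) * n) : Rˣ) : R) * M α n * (Δ : R))
    (hAM : ∀ (α : ℕ) (n : ℤ), 1 ≤ α → α ≤ r + 1 →
      (A : R) * M α n = ((q ^ (-(α : ℤ)) : Rˣ) : R) * M α n * (A : R))
    (hΔA : (Δ : R) * (A : R) = (q : R) ^ (r + 1) * (A : R) * (Δ : R))
    (hext : ∀ (α β : ℕ) (n p : ℤ), α ≤ r + 1 → β ≤ r + 1 →
      |p| ≤ |(β : ℤ) - (α : ℤ)| + 1 →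
      M α n * M β (n + p) = ((q ^ (p * ((min α β : ℕ) : ℤ)) : Rˣ) : R) * M β (n + p) * M α n) :
    ∀ (α : ℕ) (n : ℤ), 1 ≤ α → α ≤ r + 1 →
      M α n = qDet (q : R) (M 1) α n :=
  fun α n _ hα => quantum_Q_determinant_formula_general q hq (r + 1) M hM0
    (fun α n hα => ⟨⟨M α n, Mi α n, hMiL α n hα, hMiR α n hα⟩, rfl⟩)
    (fun α n hα hα' => hMsys α n hα hα'.le) hcom α n hα
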